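/- Let k be a field, R a commutative k-algebra with k-algebra automorphism σ, and Q = R[t^{±1}; σ]. Every big locally finite ℕ-graded subalgebra A of Q contains a subalgebra A' which is finitely graded (locally finite, ℕ-graded, and finitely generated as a k-algebra) and is itself a big subalgebra of Q. (Claim in the proof of Proposition 3.5.) -/

import Mathlib

/-!
If `n` and `u` witness that `A = ⊕ Vₘ tᵐ` is big, then `A' = k⟨Vₙ tⁿ⟩` works. It is generated by
homogeneous elements, hence graded (`isGradedSub_adjoin`); it lies in `A`, hence is ℕ-graded and
locally finite; it is finitely generated because `Vₙ` is finite-dimensional. Finally its degree-`n`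
coefficient space is again exactly `Vₙ`, being contained in that of `A` and containing the
generators, so the same `n` and `u` witness that `A'` is big.
-/

open Filter

/-- GK dimension of a `k`-algebra `B`, valued in `ℝ≥0∞`. -/
noncomputable def gkDim (k B : Type*) [Field k] [Ring B] [Algebra k B] : ENNReal :=
  ⨆ (V : Submodule k B) (_ : FiniteDimensional k V),
    Filter.limsup (fun n : ℕ =>
      ENNReal.ofReal (Real.log (Module.finrank k ↥(V ^ n) : ℝ) / Real.log (n : ℝ)))
      Filter.atTop

/-- `B` has exponential growth. -/
def HasExpGrowth (k B : Type*) [Field k] [Ring B] [Algebra k B] : Prop :=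
  1 < ⨆ (V : Submodule k B) (_ : FiniteDimensional k V),
    Filter.limsup (fun n : ℕ =>
      ENNReal.ofReal ((Module.finrank k ↥(V ^ n) : ℝ) ^ ((n : ℝ)⁻¹))) Filter.atTop

/-- degree-`n` component `ι(R)·tⁿ` of the skew Laurent ring. -/
noncomputable def laurentComp {k R Q : Type*} [Field k] [Ring R] [Algebra k R]
    [Ring Q] [Algebra k Q] (ι : R →ₐ[k] Q) (t : Qˣ) (n : ℤ) : Submodule k Q :=
  LinearMap.range ((LinearMap.mulRight k ((t ^ n : Qˣ) : Q)).comp ι.toLinearMap)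

/-- coefficient space `V_n = {r : R | ι(r) tⁿ ∈ A}` of a subalgebra. -/
noncomputable def coeffSpace {k R Q : Type*} [Field k] [Ring R] [Algebra k R]
    [Ring Q] [Algebra k Q] (ι : R →ₐ[k] Q) (t : Qˣ) (A : Subalgebra k Q) (n : ℤ) :
    Submodule k R :=
  Submodule.comap ((LinearMap.mulRight k ((t ^ n : Qˣ) : Q)).comp ι.toLinearMap)
    A.toSubmodule

/-- `Q` is the skew Laurent polynomial ring `R[t^{±1}; σ]` via the embedding `ι`. -/
structure IsSkewLaurent (k : Type*) {R Q : Type*} [Field k] [Ring R] [Algebra k R]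
    [Ring Q] [Algebra k Q] (σ : R ≃ₐ[k] R) (ι : R →ₐ[k] Q) (t : Qˣ) : Prop where
  twist : ∀ r : R, (t : Q) * ι r = ι (σ r) * (t : Q)
  basis : ∀ q : Q, ∃! f : ℤ →₀ R, q = f.sum fun n r => ι r * ((t ^ n : Qˣ) : Q)

section Graded

variable {k R Q : Type*} [Field k] [Ring R] [Algebra k R] [Ring Q] [Algebra k Q]

/-- `A` is a graded subalgebra of `Q`: `A = ⊕ₙ (A ∩ Qₙ)`. -/
def IsGradedSub (ι : R →ₐ[k] Q) (t : Qˣ) (A : Subalgebra k Q) : Prop :=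
  A.toSubmodule = ⨆ n : ℤ, (A.toSubmodule ⊓ laurentComp ι t n)

/-- `A` is an ℕ-graded subalgebra of `Q`. -/
def IsNGradedSub (ι : R →ₐ[k] Q) (t : Qˣ) (A : Subalgebra k Q) : Prop :=
  IsGradedSub ι t A ∧ ∀ n : ℤ, n < 0 → A.toSubmodule ⊓ laurentComp ι t n = ⊥

/-- `A` is locally finite. -/
def IsLocFin (ι : R →ₐ[k] Q) (t : Qˣ) (A : Subalgebra k Q) : Prop :=
  ∀ n : ℤ, FiniteDimensional k ↥(A.toSubmodule ⊓ laurentComp ι t n)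

/-- `A` is finitely graded: ℕ-graded, locally finite, finitely generated. -/
def IsFinGraded (ι : R →ₐ[k] Q) (t : Qˣ) (A : Subalgebra k Q) : Prop :=
  IsNGradedSub ι t A ∧ IsLocFin ι t A ∧ A.FG

/-- `A` is connected: `A₀ = k·1`. -/
def IsConnectedSub (ι : R →ₐ[k] Q) (t : Qˣ) (A : Subalgebra k Q) : Prop :=
  A.toSubmodule ⊓ laurentComp ι t 0 = (1 : Submodule k Q)

end Graded

section Big

variable {k R Q : Type*} [Field k] [CommRing R] [Algebra k R] [Ring Q] [Algebra k Q]

/-- `A` is a big (locally finite ℕ-graded) subalgebra of `Q = R[t^{±1};σ]`. -/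
def IsBigSub (ι : R →ₐ[k] Q) (t : Qˣ) (A : Subalgebra k Q) : Prop :=
  IsNGradedSub ι t A ∧ IsLocFin ι t A ∧
  ∃ n : ℤ, 1 ≤ n ∧ ∃ u : Rˣ, (u : R) ∈ coeffSpace ι t A n ∧
    ∃ M : Submonoid (Algebra.adjoin k
        ((fun r => r * ((u⁻¹ : Rˣ) : R)) '' ↑(coeffSpace ι t A n))),
      M ≤ nonZeroDivisors _ ∧ IsLocalization M R

end Big

section Aux

variable {k R Q : Type*} [Field k] [Ring R] [Algebra k R] [Ring Q] [Algebra k Q]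

lemma mem_laurentComp {ι : R →ₐ[k] Q} {t : Qˣ} {n : ℤ} {x : Q} :
    x ∈ laurentComp ι t n ↔ ∃ r : R, ι r * ((t ^ n : Qˣ) : Q) = x := by
  simp [laurentComp]

lemma mem_coeffSpace {ι : R →ₐ[k] Q} {t : Qˣ} {A : Subalgebra k Q} {n : ℤ} {r : R} :
    r ∈ coeffSpace ι t A n ↔ ι r * ((t ^ n : Qˣ) : Q) ∈ A := by
  simp [coeffSpace]

lemma exists_zpow_mul_eq {σ : R ≃ₐ[k] R} {ι : R →ₐ[k] Q} {t : Qˣ}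
    (h : ∀ r : R, (t : Q) * ι r = ι (σ r) * (t : Q)) (n : ℤ) (r : R) :
    ∃ s : R, ((t ^ n : Qˣ) : Q) * ι r = ι s * ((t ^ n : Qˣ) : Q) := by
  induction n generalizing r with
  | zero => exact ⟨r, by simp⟩
  | succ i ih =>
    obtain ⟨s, hs⟩ := ih (σ r)
    refine ⟨s, ?_⟩
    rw [zpow_add_one, Units.val_mul, mul_assoc, h, ← mul_assoc, hs, mul_assoc]
  | pred i ih =>
    obtain ⟨s, hs⟩ := ih (σ.symm r)
    refine ⟨s, ?_⟩
    have h' : ((t⁻¹ : Qˣ) : Q) * ι r = ι (σ.symm r) * ((t⁻¹ : Qˣ) : Q) := by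
      rw [Units.inv_mul_eq_iff_eq_mul, ← mul_assoc, h, AlgEquiv.apply_symm_apply,
        Units.mul_inv_cancel_right]
    rw [zpow_sub_one, Units.val_mul, mul_assoc, h', ← mul_assoc, hs, mul_assoc]

lemma mul_mem_laurentComp {σ : R ≃ₐ[k] R} {ι : R →ₐ[k] Q} {t : Qˣ}
    (h : ∀ r : R, (t : Q) * ι r = ι (σ r) * (t : Q)) {m n : ℤ} {x y : Q}
    (hx : x ∈ laurentComp ι t m) (hy : y ∈ laurentComp ι t n) :
    x * y ∈ laurentComp ι t (m + n) := by
  obtain ⟨r, rfl⟩ := mem_laurentComp.1 hx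
  obtain ⟨s, rfl⟩ := mem_laurentComp.1 hy
  obtain ⟨s', hs'⟩ := exists_zpow_mul_eq h m s
  refine mem_laurentComp.2 ⟨r * s', ?_⟩
  rw [zpow_add, Units.val_mul, map_mul, mul_assoc, ← mul_assoc (ι s'), ← hs']
  simp only [mul_assoc]

/-- A subalgebra generated by homogeneous elements is graded: it is spanned by the products of
its generators, which are homogeneous. -/
lemma isGradedSub_adjoin {σ : R ≃ₐ[k] R} {ι : R →ₐ[k] Q} {t : Qˣ}
    (h : ∀ r : R, (t : Q) * ι r = ι (σ r) * (t : Q)) {S : Set Q}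
    (hS : ∀ x ∈ S, ∃ n : ℤ, x ∈ laurentComp ι t n) :
    IsGradedSub ι t (Algebra.adjoin k S) := by
  refine le_antisymm ?_ (iSup_le fun _ => inf_le_left)
  have hom : ∀ x ∈ Submonoid.closure S, ∃ n : ℤ, x ∈ laurentComp ι t n := by
    intro x hx
    induction hx using Submonoid.closure_induction with
    | mem x hx => exact hS x hx
    | one => exact ⟨0, mem_laurentComp.2 ⟨1, by simp⟩⟩
    | mul x y _ _ hx hy =>
      obtain ⟨m, hm⟩ := hx
      obtain ⟨n, hn⟩ := hy
      exact ⟨m + n, mul_mem_laurentComp h hm hn⟩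
  conv_lhs => rw [Algebra.adjoin_eq_span]
  refine Submodule.span_le.2 fun x hx => ?_
  obtain ⟨n, hn⟩ := hom x hx
  have hxA : x ∈ Subalgebra.toSubmodule (Algebra.adjoin k S) := by
    rw [Algebra.adjoin_eq_span]
    exact Submodule.subset_span hx
  exact Submodule.mem_iSup_of_mem n ⟨hxA, hn⟩

end Aux

/-- Claim in the proof of Proposition 3.5: every big locally finite ℕ-graded subalgebra
contains a finitely graded big subalgebra. -/
theorem big_contains_finitely_graded_big (k R Q : Type*) [Field k] [CommRing R]
    [Algebra k R] [Ring Q] [Algebra k Q] (σ : R ≃ₐ[k] R) (ι : R →ₐ[k] Q) (t : Qˣ)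
    (hQ : IsSkewLaurent k σ ι t)
    (A : Subalgebra k Q) (hA : IsBigSub ι t A) :
    ∃ A' : Subalgebra k Q, A' ≤ A ∧ IsFinGraded ι t A' ∧ IsBigSub ι t A' := by
  obtain ⟨⟨-, hneg⟩, hfin, n, hn, u, hu, hM⟩ := hA
  have hle : Algebra.adjoin k (A.toSubmodule ⊓ laurentComp ι t n : Set Q) ≤ A :=
    Algebra.adjoin_le fun x hx => hx.1
  have hgr : IsNGradedSub ι t (Algebra.adjoin k (A.toSubmodule ⊓ laurentComp ι t n : Set Q)) :=
    ⟨isGradedSub_adjoin hQ.twist fun x hx => ⟨n, hx.2⟩,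
      fun m hm => eq_bot_mono (inf_le_inf_right _ hle) (hneg m hm)⟩
  have hlf : IsLocFin ι t (Algebra.adjoin k (A.toSubmodule ⊓ laurentComp ι t n : Set Q)) := by
    intro m
    have := hfin m
    exact Submodule.finiteDimensional_of_le
      (S₂ := A.toSubmodule ⊓ laurentComp ι t m) fun x hx => ⟨hle hx.1, hx.2⟩
  have hfg : (Algebra.adjoin k (A.toSubmodule ⊓ laurentComp ι t n : Set Q)).FG := by
    have := hfin n
    obtain ⟨s, hs⟩ := (Submodule.fg_iff_finiteDimensional _).2 this
    refine ⟨s, ?_⟩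
    rw [← Algebra.adjoin_span (R := k) (s := (s : Set Q)), hs]
    rfl
  have hcoeff : coeffSpace ι t
      (Algebra.adjoin k (A.toSubmodule ⊓ laurentComp ι t n : Set Q)) n = coeffSpace ι t A n := by
    ext r
    rw [mem_coeffSpace, mem_coeffSpace]
    exact ⟨fun hr => hle hr,
      fun hr => Algebra.subset_adjoin ⟨hr, mem_laurentComp.2 ⟨r, rfl⟩⟩⟩
  refine ⟨_, hle, ⟨hgr, hlf, hfg⟩, hgr, hlf, n, hn, u, ?_, ?_⟩
  · rwa [hcoeff]
  · rwa [hcoeff]
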